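/- Let K be a global function field of characteristic p containing a primitive q-th root of unity, where q ≠ p is prime. Fix a, w ∈ K^× with 1 + (a+a^{-1})w^{-1} ≠ 0, and assume that every prime 𝔞_K of K with ord_{𝔞_K} a ≠ 0 satisfies ord_{𝔞_K} w ≥ 0 and ord_{𝔞_K} w ≡ 0 mod q. Let L = K((1+(a+a^{-1})w^{-1})^{1/q}). Then: (a) if 𝔭_K is a prime of K with ord_{𝔭_K} w < 0 and ord_{𝔭_K} w ≢ 0 mod q, then 𝔭_K splits completely in L, and in particular every prime 𝔭_L of L above 𝔭_K satisfies ord_{𝔭_L} w < 0 and ord_{𝔭_L} w ≢ 0 mod q; (b) every prime 𝔱_L of L satisfies ord_{𝔱_L} a ≡ 0 mod q. -/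

import Mathlib

noncomputable section

/-- A normalized (surjective onto `ℤ`) discrete valuation on a field `K`, i.e. a
"prime" of a global function field. -/
structure FFPrime (K : Type) [Field K] where
  ord : K → WithTop ℤ
  ord_zero : ord 0 = ⊤
  ord_ne_top : ∀ x : K, x ≠ 0 → ord x ≠ ⊤
  ord_one : ord 1 = 0
  ord_mul : ∀ x y : K, ord (x * y) = ord x + ord y
  ord_add : ∀ x y : K, min (ord x) (ord y) ≤ ord (x + y)
  ord_surj : ∀ n : ℤ, ∃ x : K, ord x = (n : WithTop ℤ)

namespace FFPrime

variable {K L : Type} [Field K] [Field L]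

/-- `w` lies over `v` along `φ`, with ramification index `e`. -/
def LiesOverWith (w : FFPrime L) (v : FFPrime K) (φ : K →+* L) (e : ℕ) : Prop :=
  0 < e ∧ ∀ x : K, w.ord (φ x) = ((e : ℤ) : WithTop ℤ) * v.ord x

/-- `w` lies over `v` along `φ`. -/
def LiesOver (w : FFPrime L) (v : FFPrime K) (φ : K →+* L) : Prop :=
  ∃ e : ℕ, w.LiesOverWith v φ e

open Classical in
/-- The ramification index `e(w/v)`. -/
noncomputable def ramIdx (w : FFPrime L) (v : FFPrime K) (φ : K →+* L) : ℕ :=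
  if h : ∃ e : ℕ, w.LiesOverWith v φ e then h.choose else 0

/-- The residue field of `v` has exactly `n` elements. -/
def HasResidueCard (v : FFPrime K) (n : ℕ) : Prop :=
  ∃ s : Finset K, s.card = n ∧ (∀ x ∈ s, 0 ≤ v.ord x) ∧
    (∀ x ∈ s, ∀ y ∈ s, x ≠ y → ¬ 0 < v.ord (x - y)) ∧
    (∀ z : K, 0 ≤ v.ord z → ∃ x ∈ s, 0 < v.ord (z - x))

open Classical in
/-- The residue (relative) degree `f(w/v)`: the unique `f ≥ 1` with
`#κ_w = (#κ_v) ^ f` (residue fields of global function fields are finite). -/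
noncomputable def resDeg (w : FFPrime L) (v : FFPrime K) : ℕ :=
  if h : ∃ f : ℕ, 0 < f ∧ ∃ m n : ℕ, 1 < m ∧ v.HasResidueCard m ∧
      w.HasResidueCard n ∧ n = m ^ f then h.choose else 0

/-- `v` splits completely in the extension given by `φ`: every prime above it has
ramification index and residue degree `1`. -/
def SplitsCompletely (v : FFPrime K) (φ : K →+* L) : Prop :=
  ∀ w : FFPrime L, w.LiesOver v φ → w.ramIdx v φ = 1 ∧ w.resDeg v = 1

/-- `v` is inert in the finite extension `M/K`: there is a unique prime above it, with
ramification index `1` and residue degree `[M : K]`. -/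
def IsInert (v : FFPrime K) (M : Type) [Field M] [Algebra K M] : Prop :=
  (∃! w : FFPrime M, w.LiesOver v (algebraMap K M)) ∧
    ∀ w : FFPrime M, w.LiesOver v (algebraMap K M) →
      w.ramIdx v (algebraMap K M) = 1 ∧ w.resDeg v = Module.finrank K M

/-- `v` ramifies in the extension given by `φ`: some prime above it has ramification
index `> 1`. -/
def Ramifies (v : FFPrime K) (φ : K →+* L) : Prop :=
  ∃ w : FFPrime L, w.LiesOver v φ ∧ 2 ≤ w.ramIdx v φ

/-- `ord_v z ≡ 0 mod q`. -/
def OrdDvd (v : FFPrime K) (q : ℕ) (z : K) : Prop :=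
  ∃ n : ℤ, v.ord z = (((q : ℤ) * n : ℤ) : WithTop ℤ)

end FFPrime

/-- A nontrivial (rank one) valuation on a possibly infinite algebraic extension of a
global function field, with values in `ℚ ∪ {∞}`. -/
structure FFVal (B : Type) [Field B] where
  ord : B → WithTop ℚ
  ord_zero : ord 0 = ⊤
  ord_ne_top : ∀ x : B, x ≠ 0 → ord x ≠ ⊤
  ord_one : ord 1 = 0
  ord_mul : ∀ x y : B, ord (x * y) = ord x + ord y
  ord_add : ∀ x y : B, min (ord x) (ord y) ≤ ord (x + y)
  nontrivial : ∃ x : B, ord x ≠ 0 ∧ ord x ≠ ⊤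

/-- The valuation `V` of the big field restricts, up to a normalization factor `c`, to
the (normalized discrete) prime `v` of `K` along `φ`; i.e. `v` is the prime of `K`
lying below `V`. -/
def FFVal.RestrictsTo {K B : Type} [Field K] [Field B] (V : FFVal B) (v : FFPrime K)
    (φ : K →+* B) : Prop :=
  ∃ c : ℚ, 0 < c ∧
    ∀ x : K, V.ord (φ x) = ((c : ℚ) : WithTop ℚ) * WithTop.map (fun n : ℤ => (n : ℚ)) (v.ord x)

/-- The algebraic extension `B` of the rational function field `F0 = 𝔽_p(t)` is
`q`-bounded: for every valuation of `B`, the `q`-adic valuations of the ramification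
indices and residue degrees along every finite subextension are bounded. -/
def IsQBounded (q : ℕ) (F0 B : Type) [Field F0] [Field B] [Algebra F0 B] : Prop :=
  ∀ V : FFVal B, ∃ C : ℕ,
    ∀ L : IntermediateField F0 B, FiniteDimensional F0 L →
      ∀ v0 : FFPrime F0, ∀ vL : FFPrime L,
        V.RestrictsTo v0 (algebraMap F0 B) →
        V.RestrictsTo vL L.val.toRingHom →
        padicValNat q (vL.ramIdx v0 (algebraMap F0 L)) ≤ C ∧
        padicValNat q (vL.resDeg v0) ≤ C

/-- The prime `v` of `K` has uniformly `q`-bounded ramification in `B`. -/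
def UnifQBoundedRam (q : ℕ) {K : Type} [Field K] (B : Type) [Field B] [Algebra K B]
    (v : FFPrime K) : Prop :=
  ∃ C : ℕ, ∀ F : IntermediateField K B, FiniteDimensional K F →
    ∀ w : FFPrime F, w.LiesOver v (algebraMap K F) →
      padicValNat q (w.ramIdx v (algebraMap K F)) ≤ C

/-- The prime `v` of `K` has uniformly absolutely bounded ramification in `B`. -/
def UnifAbsBoundedRam {K : Type} [Field K] (B : Type) [Field B] [Algebra K B]
    (v : FFPrime K) : Prop :=
  ∃ C : ℕ, ∀ F : IntermediateField K B, FiniteDimensional K F →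
    ∀ w : FFPrime F, w.LiesOver v (algebraMap K F) →
      w.ramIdx v (algebraMap K F) ≤ C

/-- The prime `v` of `K` has uniformly `q`-bounded relative (residue) degree in `B`. -/
def UnifQBoundedRes (q : ℕ) {K : Type} [Field K] (B : Type) [Field B] [Algebra K B]
    (v : FFPrime K) : Prop :=
  ∃ C : ℕ, ∀ F : IntermediateField K B, FiniteDimensional K F →
    ∀ w : FFPrime F, w.LiesOver v (algebraMap K F) →
      padicValNat q (w.resDeg v) ≤ C

/-- The prime `v` of `K` is uniformly `q`-bounded in `B`. -/
def UniformlyQBoundedAt (q : ℕ) {K : Type} [Field K] (B : Type) [Field B] [Algebra K B]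
    (v : FFPrime K) : Prop :=
  UnifQBoundedRam q B v ∧ UnifQBoundedRes q B v

/-- The integral closure in `B` of the valuation ring `O_v = {x ∈ K : ord_v x ≥ 0}`. -/
def valIntegralClosure {K : Type} [Field K] (v : FFPrime K) (B : Type) [Field B]
    [Algebra K B] : Set B :=
  {x : B | ∃ P : Polynomial K, P.Monic ∧ (∀ n : ℕ, 0 ≤ v.ord (P.coeff n)) ∧
    Polynomial.aeval x P = 0}

/-- The integral closure in `B` of the ring `O_{K,S}` of `S`-integers of `K`. -/
def sIntegralClosure {K : Type} [Field K] (S : Set (FFPrime K)) (B : Type) [Field B]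
    [Algebra K B] : Set B :=
  {x : B | ∃ P : Polynomial K, P.Monic ∧
    (∀ n : ℕ, ∀ v : FFPrime K, v ∉ S → 0 ≤ v.ord (P.coeff n)) ∧
    Polynomial.aeval x P = 0}

/-- Elements of `B` that are units at every prime of `B` lying over a prime of `S`. -/
def unitsAtS {K : Type} [Field K] (S : Set (FFPrime K)) (B : Type) [Field B]
    [Algebra K B] : Set B :=
  {x : B | ∀ V : FFVal B, (∃ v ∈ S, V.RestrictsTo v (algebraMap K B)) → V.ord x = 0}

/-- Elements `x` of `B` with `ord (x - 1) > 0` at every prime of `B` lying over a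
prime of `S`. -/
def onesAtS {K : Type} [Field K] (S : Set (FFPrime K)) (B : Type) [Field B]
    [Algebra K B] : Set B :=
  {x : B | ∀ V : FFVal B, (∃ v ∈ S, V.RestrictsTo v (algebraMap K B)) → 0 < V.ord (x - 1)}

/-- A subset of a commutative ring is first-order definable in the language of rings
`{0, 1, +, ·}` with parameters from the ring. -/
def FODefinable {R : Type} [CommRing R] (X : Set R) : Prop :=
  letI : FirstOrder.Ring.CompatibleRing R := FirstOrder.Ring.compatibleRingOfRing R
  Set.Definable₁ (Set.univ : Set R) FirstOrder.Language.ring X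

/-- A subset of a commutative ring is existentially (diophantine) definable: it is cut
out by a block of existential quantifiers followed by a system of polynomial equations,
with parameters (coefficients) from the ring. -/
def ExistDefinable {R : Type} [CommRing R] (X : Set R) : Prop :=
  ∃ (k m : ℕ) (P : Fin m → MvPolynomial (Fin (k + 1)) R),
    ∀ x : R, x ∈ X ↔ ∃ y : Fin k → R, ∀ i : Fin m,
      MvPolynomial.eval (Fin.cons x y) (P i) = 0

/-- Solvability of the norm equation `N(y) = b·x^q + b^q` over (every realization of)
the tower `L₂(a^{1/q})/L₂`, where `L₁ = F((1+(b x^q+b^q)⁻¹)^{1/q})` and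
`L₂ = L₁((1+(a+a⁻¹)b⁻¹)^{1/q})`. -/
def NormTower2Solvable (q : ℕ) (F : Type) [Field F] (a b x : F) : Prop :=
  ∀ (M1 : Type) [Field M1] [Algebra F M1] (α1 : M1),
    α1 ^ q = algebraMap F M1 (1 + (b * x ^ q + b ^ q)⁻¹) →
    IntermediateField.adjoin F {α1} = ⊤ →
    ∀ (M2 : Type) [Field M2] [Algebra M1 M2] (α2 : M2),
      α2 ^ q = algebraMap M1 M2 (algebraMap F M1 (1 + (a + a⁻¹) * b⁻¹)) →
      IntermediateField.adjoin M1 {α2} = ⊤ →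
      ∀ (M3 : Type) [Field M3] [Algebra M2 M3] (α3 : M3),
        α3 ^ q = algebraMap M2 M3 (algebraMap M1 M2 (algebraMap F M1 a)) →
        IntermediateField.adjoin M2 {α3} = ⊤ →
        ∃ y : M3, Algebra.norm M2 y = algebraMap M1 M2 (algebraMap F M1 (b * x ^ q + b ^ q))

/-- Solvability of the norm equation `N(y) = b·x^q + b^q` over (every realization of)
the tower `L₄(a^{1/q})/L₄`, where `L₁ = F((1+(b x^q+b^q)⁻¹)^{1/q})`,
`L₃ = L₁((1+x⁻¹)^{1/q})` and `L₄ = L₃((1+(a+a⁻¹)x⁻¹)^{1/q})`. -/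
def NormTower4Solvable (q : ℕ) (F : Type) [Field F] (a b x : F) : Prop :=
  ∀ (M1 : Type) [Field M1] [Algebra F M1] (α1 : M1),
    α1 ^ q = algebraMap F M1 (1 + (b * x ^ q + b ^ q)⁻¹) →
    IntermediateField.adjoin F {α1} = ⊤ →
    ∀ (M3 : Type) [Field M3] [Algebra M1 M3] (α3 : M3),
      α3 ^ q = algebraMap M1 M3 (algebraMap F M1 (1 + x⁻¹)) →
      IntermediateField.adjoin M1 {α3} = ⊤ →
      ∀ (M4 : Type) [Field M4] [Algebra M3 M4] (α4 : M4),
        α4 ^ q = algebraMap M3 M4 (algebraMap M1 M3 (algebraMap F M1 (1 + (a + a⁻¹) * x⁻¹))) →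
        IntermediateField.adjoin M3 {α4} = ⊤ →
        ∀ (M5 : Type) [Field M5] [Algebra M4 M5] (α5 : M5),
          α5 ^ q = algebraMap M4 M5 (algebraMap M3 M4 (algebraMap M1 M3 (algebraMap F M1 a))) →
          IntermediateField.adjoin M4 {α5} = ⊤ →
          ∃ y : M5, Algebra.norm M4 y =
            algebraMap M3 M4 (algebraMap M1 M3 (algebraMap F M1 (b * x ^ q + b ^ q)))

/-- Unsolvability of the norm equation `N(y) = b·x^q + b^q` over (every realization of)
the tower `L₄(a^{1/q})/L₄` as in `NormTower4Solvable`. -/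
def NormTower4Unsolvable (q : ℕ) (F : Type) [Field F] (a b x : F) : Prop :=
  ∀ (M1 : Type) [Field M1] [Algebra F M1] (α1 : M1),
    α1 ^ q = algebraMap F M1 (1 + (b * x ^ q + b ^ q)⁻¹) →
    IntermediateField.adjoin F {α1} = ⊤ →
    ∀ (M3 : Type) [Field M3] [Algebra M1 M3] (α3 : M3),
      α3 ^ q = algebraMap M1 M3 (algebraMap F M1 (1 + x⁻¹)) →
      IntermediateField.adjoin M1 {α3} = ⊤ →
      ∀ (M4 : Type) [Field M4] [Algebra M3 M4] (α4 : M4),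
        α4 ^ q = algebraMap M3 M4 (algebraMap M1 M3 (algebraMap F M1 (1 + (a + a⁻¹) * x⁻¹))) →
        IntermediateField.adjoin M3 {α4} = ⊤ →
        ∀ (M5 : Type) [Field M5] [Algebra M4 M5] (α5 : M5),
          α5 ^ q = algebraMap M4 M5 (algebraMap M3 M4 (algebraMap M1 M3 (algebraMap F M1 a))) →
          IntermediateField.adjoin M4 {α5} = ⊤ →
          ¬ ∃ y : M5, Algebra.norm M4 y =
            algebraMap M3 M4 (algebraMap M1 M3 (algebraMap F M1 (b * x ^ q + b ^ q)))


namespace FFPrime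

variable {K L : Type} [Field K] [Field L]

/-- the additive valuation attached to a prime -/
def val (v : FFPrime K) : AddValuation K (WithTop ℤ) :=
  AddValuation.of v.ord v.ord_zero v.ord_one v.ord_add v.ord_mul

lemma val_apply (v : FFPrime K) (x : K) : v.val x = v.ord x := rfl

lemma exists_int (v : FFPrime K) {x : K} (hx : x ≠ 0) : ∃ n : ℤ, v.ord x = n := by
  obtain ⟨n, hn⟩ := WithTop.ne_top_iff_exists.mp (v.ord_ne_top x hx)
  exact ⟨n, hn.symm⟩

lemma ord_pow_eq (v : FFPrime K) (x : K) (n : ℕ) : v.ord (x ^ n) = n • v.ord x :=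
  v.val.map_pow x n

lemma ord_neg (v : FFPrime K) (x : K) : v.ord (-x) = v.ord x := v.val.map_neg x

lemma ord_sub_swap (v : FFPrime K) (x y : K) : v.ord (x - y) = v.ord (y - x) :=
  v.val.map_sub_swap x y

lemma ord_le_add (v : FFPrime K) {x y : K} {g : WithTop ℤ} (hx : g ≤ v.ord x)
    (hy : g ≤ v.ord y) : g ≤ v.ord (x + y) := v.val.map_le_add hx hy

lemma ord_lt_add (v : FFPrime K) {x y : K} {g : WithTop ℤ} (hx : g < v.ord x)
    (hy : g < v.ord y) : g < v.ord (x + y) := v.val.map_lt_add hx hy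

lemma ord_inv_int (v : FFPrime K) {x : K} {n : ℤ} (h : v.ord x = n) :
    v.ord x⁻¹ = ((-n : ℤ) : WithTop ℤ) := by
  have hx : x ≠ 0 := by
    rintro rfl
    rw [v.ord_zero] at h
    exact WithTop.coe_ne_top h.symm
  obtain ⟨m, hm⟩ := v.exists_int (inv_ne_zero hx)
  have h1 := v.ord_mul x x⁻¹
  rw [mul_inv_cancel₀ hx, v.ord_one, h, hm] at h1
  rw [hm]
  have : (0 : ℤ) = n + m := by exact_mod_cast h1
  congr 1
  omega

lemma ord_eq_zero_of_pow (v : FFPrime K) {x : K} {n : ℕ} (hn : n ≠ 0) (h : x ^ n = 1) :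
    v.ord x = 0 := by
  have hx : x ≠ 0 := by
    rintro rfl
    rw [zero_pow hn] at h
    exact zero_ne_one h
  obtain ⟨m, hm⟩ := v.exists_int hx
  have h1 := v.ord_pow_eq x n
  rw [h, v.ord_one, hm] at h1
  have h2 : (0 : ℤ) = n • m := by exact_mod_cast h1
  have h3 : m = 0 := by
    simpa [hn] using h2.symm
  rw [hm, h3]; rfl

lemma ord_sum_nonneg (v : FFPrime K) {ι : Type*} (s : Finset ι) (f : ι → K) (g : WithTop ℤ)
    (h : ∀ i ∈ s, g ≤ v.ord (f i)) : g ≤ v.ord (∑ i ∈ s, f i) :=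
  v.val.map_le_sum h

lemma ord_prod_eq (v : FFPrime K) {ι : Type*} (s : Finset ι) (f : ι → K) :
    v.ord (∏ i ∈ s, f i) = ∑ i ∈ s, v.ord (f i) := by
  classical
  induction s using Finset.induction_on with
  | empty => simpa using v.ord_one
  | insert a s ha ih => rw [Finset.prod_insert ha, Finset.sum_insert ha, v.ord_mul, ih]

/-- the valuation is nontrivial on any subfield over which the field is algebraic -/
lemma exists_ord_ne_zero [Algebra K L] [Algebra.IsAlgebraic K L] (u : FFPrime L) :
    ∃ x : K, x ≠ 0 ∧ u.ord (algebraMap K L x) ≠ 0 := by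
  by_contra! hcon
  have hnn : ∀ x : K, 0 ≤ u.ord (algebraMap K L x) := by
    intro x
    by_cases hx : x = 0
    · subst hx; simp [u.ord_zero]
    · rw [hcon x hx]
  obtain ⟨y, hy⟩ := u.ord_surj (-1)
  have hyi : IsIntegral K y := Algebra.IsIntegral.isIntegral y
  obtain ⟨P, hP, hPy⟩ := hyi
  have hd : P.natDegree ≠ 0 := by
    intro h0
    rw [hP.natDegree_eq_zero.mp h0] at hPy
    simp at hPy
  rw [Polynomial.eval₂_eq_sum_range, Finset.sum_range_succ, hP.coeff_natDegree, map_one,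
    one_mul] at hPy
  have h1 : y ^ P.natDegree =
      -∑ i ∈ Finset.range P.natDegree, algebraMap K L (P.coeff i) * y ^ i :=
    eq_neg_of_add_eq_zero_right hPy
  have h2 : ∀ n : ℕ, u.ord (y ^ n) = ((-(n : ℤ) : ℤ) : WithTop ℤ) := by
    intro n
    rw [u.ord_pow_eq, hy, ← WithTop.coe_nsmul]
    simp
  have h3 : (((1 - (P.natDegree : ℤ)) : ℤ) : WithTop ℤ) ≤ u.ord (y ^ P.natDegree) := by
    rw [h1, ord_neg]
    apply ord_sum_nonneg
    intro i hi
    rw [u.ord_mul, h2]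
    have hi' := Finset.mem_range.mp hi
    calc (((1 - (P.natDegree : ℤ)) : ℤ) : WithTop ℤ) ≤ ((-(i : ℤ) : ℤ) : WithTop ℤ) := by
          rw [WithTop.coe_le_coe]; omega
      _ = 0 + ((-(i : ℤ) : ℤ) : WithTop ℤ) := (zero_add _).symm
      _ ≤ _ := add_le_add_left (hnn _) _
  rw [h2, WithTop.coe_le_coe] at h3
  omega

/-- every prime lies over some prime of an algebraic subfield -/
lemma exists_under [Algebra K L] [Algebra.IsAlgebraic K L] (u : FFPrime L) :
    ∃ v : FFPrime K, u.LiesOver v (algebraMap K L) := by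
  classical
  have hint : ∀ x : K, x ≠ 0 → ∃ n : ℤ, u.ord (algebraMap K L x) = n := fun x hx =>
    u.exists_int (by simpa using hx)
  let o : K → ℤ := fun x => (u.ord (algebraMap K L x)).untopD 0
  have ho : ∀ x : K, x ≠ 0 → u.ord (algebraMap K L x) = o x := by
    intro x hx
    obtain ⟨n, hn⟩ := hint x hx
    simp only [o, hn, WithTop.untopD_coe]
  have homul : ∀ x y : K, x ≠ 0 → y ≠ 0 → o (x * y) = o x + o y := by
    intro x y hx hy
    have h := u.ord_mul (algebraMap K L x) (algebraMap K L y)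
    rw [← map_mul, ho _ (mul_ne_zero hx hy), ho _ hx, ho _ hy] at h
    exact_mod_cast h
  have hoone : o 1 = 0 := by
    have := homul 1 1 one_ne_zero one_ne_zero
    rw [mul_one] at this; omega
  let H : AddSubgroup ℤ :=
    { carrier := {n | ∃ x : K, x ≠ 0 ∧ o x = n}
      zero_mem' := ⟨1, one_ne_zero, hoone⟩
      add_mem' := by
        rintro _ _ ⟨x, hx, rfl⟩ ⟨y, hy, rfl⟩
        exact ⟨x * y, mul_ne_zero hx hy, homul x y hx hy⟩
      neg_mem' := by
        rintro _ ⟨x, hx, rfl⟩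
        refine ⟨x⁻¹, inv_ne_zero hx, ?_⟩
        have := homul x x⁻¹ hx (inv_ne_zero hx)
        rw [mul_inv_cancel₀ hx, hoone] at this; omega }
  obtain ⟨g, hg⟩ := Int.subgroup_cyclic H
  have hmem : ∀ n : ℤ, n ∈ H ↔ (g.natAbs : ℤ) ∣ n := by
    intro n
    rw [hg, AddSubgroup.mem_closure_singleton, Int.natAbs_dvd]
    constructor
    · rintro ⟨k, rfl⟩; exact ⟨k, by simp [mul_comm]⟩
    · rintro ⟨k, rfl⟩; exact ⟨k, by simp [mul_comm]⟩
  obtain ⟨e, he⟩ : ∃ e : ℕ, e = g.natAbs := ⟨_, rfl⟩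
  rw [← he] at hmem
  have hepos : 0 < e := by
    rcases Nat.eq_zero_or_pos e with h0 | h0
    · obtain ⟨x, hx, hx'⟩ := exists_ord_ne_zero (K := K) u
      have := (hmem (o x)).mp ⟨x, hx, rfl⟩
      rw [h0] at this
      have h1 : o x = 0 := by simpa using this
      rw [ho x hx, h1] at hx'
      exact absurd rfl hx'
    · exact h0
  have hdv : ∀ x : K, x ≠ 0 → o x = e * (o x / e) := by
    intro x hx
    exact (Int.mul_ediv_cancel' ((hmem (o x)).mp ⟨x, hx, rfl⟩)).symm
  have he0 : (0 : ℤ) < e := by exact_mod_cast hepos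
  refine ⟨⟨fun x => if x = 0 then ⊤ else ((o x / e : ℤ) : WithTop ℤ), by simp, ?_, ?_, ?_, ?_, ?_⟩,
    e, hepos, ?_⟩
  · intro x hx; simp [hx]
  · simp [hoone]
  · intro x y
    by_cases hx : x = 0
    · simp [hx]
    by_cases hy : y = 0
    · simp [hy]
    simp only [hx, hy, mul_eq_zero, or_self, if_false]
    rw [← WithTop.coe_add, homul x y hx hy, Int.add_ediv_of_dvd_left]
    exact (hmem (o x)).mp ⟨x, hx, rfl⟩
  · intro x y
    by_cases hx : x = 0
    · simp [hx]
    by_cases hy : y = 0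
    · simp [hy]
    by_cases hxy : x + y = 0
    · simp [hxy]
    simp only [hx, hy, hxy, if_false]
    have h := u.ord_add (algebraMap K L x) (algebraMap K L y)
    rw [← map_add, ho _ hx, ho _ hy, ho _ hxy, ← WithTop.coe_min, WithTop.coe_le_coe,
      min_le_iff] at h
    rw [← WithTop.coe_min, WithTop.coe_le_coe, min_le_iff]
    rcases h with h | h
    · exact Or.inl (Int.ediv_le_ediv he0 h)
    · exact Or.inr (Int.ediv_le_ediv he0 h)
  · intro n
    obtain ⟨x, hx, hx'⟩ := (hmem (e * n)).mpr ⟨n, rfl⟩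
    refine ⟨x, ?_⟩
    simp only [hx, if_false, hx']
    rw [Int.mul_ediv_cancel_left _ he0.ne']
  · intro x
    by_cases hx : x = 0
    · simp [hx, u.ord_zero, hepos.ne']
    · simp only [hx, if_false]
      rw [ho x hx, ← WithTop.coe_mul, ← hdv x hx]

lemma residueCard_le (v : FFPrime K) {m n : ℕ} (hm : v.HasResidueCard m)
    (hn : v.HasResidueCard n) : m ≤ n := by
  obtain ⟨s, hs, hs0, hs1, -⟩ := hm
  obtain ⟨t, ht, -, -, ht2⟩ := hn
  rw [← hs, ← ht]
  choose! f hf hf' using ht2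
  refine Finset.card_le_card_of_injOn f (fun x hx => hf x (hs0 x hx)) ?_
  intro x hx y hy hxy
  by_contra hne
  apply hs1 x hx y hy hne
  have h1 := hf' x (hs0 x hx)
  have h2 := hf' y (hs0 y hy)
  rw [← hxy, v.ord_sub_swap] at h2
  simpa using v.ord_lt_add h1 h2

/-- the ramification index and the residue degree are 1 when `K` is dense enough -/
lemma split_of_dense (v : FFPrime K) (u : FFPrime L) (φ : K →+* L)
    (hu : u.LiesOver v φ) {m : ℕ} (hm1 : 1 < m) (hm : v.HasResidueCard m)
    (hd : ∀ (z : L) (N : ℤ), ∃ x : K, (N : WithTop ℤ) ≤ u.ord (z - φ x)) :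
    u.LiesOverWith v φ 1 ∧ u.ramIdx v φ = 1 ∧ u.resDeg v = 1 := by
  have key : ∀ e : ℕ, u.LiesOverWith v φ e → e = 1 := by
    rintro e ⟨he, h⟩
    obtain ⟨z, hz⟩ := u.ord_surj 1
    obtain ⟨x, hx⟩ := hd z 2
    have hlt : u.ord z < u.ord (φ x - z) := by
      rw [u.ord_sub_swap, hz]
      exact lt_of_lt_of_le (by norm_cast) hx
    have h1 : u.ord (φ x) = 1 := by
      rw [← u.val_apply, u.val.map_eq_of_lt_sub hlt, u.val_apply, hz]; rfl
    have hx0 : x ≠ 0 := by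
      rintro rfl
      rw [map_zero, u.ord_zero] at h1
      exact absurd h1 (by simp)
    obtain ⟨n, hn⟩ := v.exists_int hx0
    rw [h x, hn, ← WithTop.coe_mul] at h1
    have h2 : (e : ℤ) * n = 1 := by exact_mod_cast h1
    have := Int.isUnit_iff.mp (IsUnit.of_mul_eq_one _ h2)
    omega
  obtain ⟨e, he⟩ := hu
  have he1 := key e he
  subst he1
  have hord : ∀ x : K, u.ord (φ x) = v.ord x := by
    intro x
    rw [he.2 x]; simp
  refine ⟨he, ?_, ?_⟩
  · have hex : ∃ e : ℕ, u.LiesOverWith v φ e := ⟨1, he⟩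
    rw [ramIdx, dif_pos hex]
    exact key _ hex.choose_spec
  · have hum : u.HasResidueCard m := by
      classical
      obtain ⟨s, hs, hs0, hs1, hs2⟩ := hm
      refine ⟨s.image φ, by rw [Finset.card_image_of_injective _ φ.injective, hs], ?_, ?_, ?_⟩
      · intro x hx
        obtain ⟨y, hy, rfl⟩ := Finset.mem_image.mp hx
        rw [hord]; exact hs0 y hy
      · intro x hx x' hx' hne
        obtain ⟨y, hy, rfl⟩ := Finset.mem_image.mp hx
        obtain ⟨y', hy', rfl⟩ := Finset.mem_image.mp hx'
        rw [← map_sub, hord]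
        exact hs1 y hy y' hy' (fun h => hne (by rw [h]))
      · intro z hz
        obtain ⟨x, hx⟩ := hd z 1
        have hx' : 0 < u.ord (z - φ x) := lt_of_lt_of_le (by norm_cast) hx
        have hx0 : 0 ≤ v.ord x := by
          rw [← hord]
          have h3 : 0 ≤ u.ord (φ x - z) := by rw [u.ord_sub_swap]; exact hx'.le
          simpa using u.ord_le_add h3 hz
        obtain ⟨y, hy, hy'⟩ := hs2 x hx0
        refine ⟨φ y, Finset.mem_image_of_mem _ hy, ?_⟩
        rw [← hord, map_sub] at hy'
        simpa using u.ord_lt_add hx' hy'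
    have hex : ∃ f : ℕ, 0 < f ∧ ∃ m n : ℕ, 1 < m ∧ v.HasResidueCard m ∧
      u.HasResidueCard n ∧ n = m ^ f := ⟨1, one_pos, m, m, hm1, hm, hum, (pow_one m).symm⟩
    rw [resDeg, dif_pos hex]
    obtain ⟨hf, m', n', hm1', hm', hn', heq⟩ := hex.choose_spec
    have e1 : m' = m := le_antisymm (v.residueCard_le hm' hm) (v.residueCard_le hm hm')
    have e2 : n' = m := le_antisymm (u.residueCard_le hn' hum) (u.residueCard_le hum hn')
    rw [e1, e2] at heq
    have : m ^ 1 = m ^ hex.choose := by rw [pow_one]; exact heq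
    exact (Nat.pow_right_injective hm1 this).symm

end FFPrime

namespace FFPrime

variable {K L : Type} [Field K] [Field L]

/-- the valuation ring of a prime -/
def oRing (v : FFPrime K) : Subring K where
  carrier := {x | 0 ≤ v.ord x}
  mul_mem' := by
    intro x y hx hy
    simp only [Set.mem_ofPred_eq] at *
    rw [v.ord_mul]; exact add_nonneg hx hy
  one_mem' := by simp [v.ord_one]
  add_mem' := by
    intro x y hx hy
    exact v.ord_le_add hx hy
  zero_mem' := by simp [v.ord_zero]
  neg_mem' := by
    intro x hx
    simp only [Set.mem_ofPred_eq] at *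
    rw [v.ord_neg]; exact hx

lemma mem_oRing (v : FFPrime K) (x : K) : x ∈ v.oRing ↔ 0 ≤ v.ord x := Iff.rfl

/-- the maximal ideal -/
def mIdeal (v : FFPrime K) : Ideal v.oRing where
  carrier := {x | 0 < v.ord (x : K)}
  add_mem' := by
    intro x y hx hy
    exact v.ord_lt_add hx hy
  zero_mem' := by simp [v.ord_zero]
  smul_mem' := by
    intro c x hx
    simp only [Set.mem_ofPred_eq, smul_eq_mul, Subring.coe_mul] at *
    rw [v.ord_mul]
    exact lt_of_lt_of_le hx (le_add_of_nonneg_left c.2)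

lemma mem_mIdeal (v : FFPrime K) (x : v.oRing) : x ∈ v.mIdeal ↔ 0 < v.ord (x : K) := Iff.rfl

instance (v : FFPrime K) : v.mIdeal.IsPrime where
  ne_top' := by
    rw [Ideal.ne_top_iff_one, mem_mIdeal]
    simp [v.ord_one]
  mem_or_mem' := by
    intro x y h
    rw [mem_mIdeal, Subring.coe_mul, v.ord_mul] at h
    by_contra! hcon
    simp only [mem_mIdeal, not_lt] at hcon
    exact absurd h (not_lt.mpr (add_nonpos hcon.1 hcon.2))

lemma hasResidueCard_of_finite (v : FFPrime K) [Finite (v.oRing ⧸ v.mIdeal)] :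
    ∃ m, 1 < m ∧ v.HasResidueCard m := by
  classical
  have := Fintype.ofFinite (v.oRing ⧸ v.mIdeal)
  let g : v.oRing ⧸ v.mIdeal → K := fun z => ((Quotient.out z : v.oRing) : K)
  have hout : ∀ z : v.oRing ⧸ v.mIdeal, Ideal.Quotient.mk v.mIdeal (Quotient.out z) = z :=
    fun z => Quotient.out_eq z
  have hg : Function.Injective g := by
    intro z z' h
    have : Quotient.out z = Quotient.out z' := Subtype.ext h
    rw [← hout z, ← hout z', this]
  refine ⟨Fintype.card (v.oRing ⧸ v.mIdeal), Fintype.one_lt_card,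
    Finset.univ.image g, ?_, ?_, ?_, ?_⟩
  · rw [Finset.card_image_of_injective _ hg, Finset.card_univ]
  · intro x hx
    obtain ⟨z, -, rfl⟩ := Finset.mem_image.mp hx
    exact (Quotient.out z).2
  · intro x hx y hy hne hlt
    obtain ⟨z, -, rfl⟩ := Finset.mem_image.mp hx
    obtain ⟨z', -, rfl⟩ := Finset.mem_image.mp hy
    apply hne
    have h1 : Quotient.out z - Quotient.out z' ∈ v.mIdeal := hlt
    rw [← Ideal.Quotient.mk_eq_mk_iff_sub_mem, hout, hout] at h1
    rw [h1]
  · intro z hz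
    refine ⟨g (Ideal.Quotient.mk v.mIdeal ⟨z, hz⟩), Finset.mem_image_of_mem _ (Finset.mem_univ _), ?_⟩
    have h1 := hout (Ideal.Quotient.mk v.mIdeal ⟨z, hz⟩)
    rw [eq_comm, Ideal.Quotient.mk_eq_mk_iff_sub_mem] at h1
    exact h1

/-- elements of a domain which are roots of nonzero polynomials of bounded degree over a finite
subring are finite in number -/
lemma finite_of_bounded_degree (R k : Type) [CommRing R] [Finite R] [CommRing k] [IsDomain k]
    (f : R →+* k) (hf : Function.Injective f) (N : ℕ)
    (h : ∀ x : k, ∃ Q : Polynomial R, Q ≠ 0 ∧ Q.natDegree ≤ N ∧ Q.eval₂ f x = 0) : Finite k := by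
  classical
  let mkp : (Fin (N + 1) → R) → Polynomial k := fun c =>
    ∑ i : Fin (N + 1), Polynomial.C (f (c i)) * Polynomial.X ^ (i : ℕ)
  have hfin : (⋃ c : Fin (N + 1) → R, ((mkp c).roots.toFinset : Set k)).Finite :=
    Set.finite_iUnion (fun c => Finset.finite_toSet _)
  apply Set.finite_univ_iff.mp
  apply hfin.subset
  intro x _
  obtain ⟨Q, hQ, hd, hx⟩ := h x
  refine Set.mem_iUnion.mpr ⟨fun i => Q.coeff i, ?_⟩
  have hmk : mkp (fun i => Q.coeff i) = Q.map f := by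
    simp only [mkp]
    rw [Fin.sum_univ_eq_sum_range (fun i => Polynomial.C (f (Q.coeff i)) * Polynomial.X ^ i) (N + 1)]
    rw [Polynomial.as_sum_range_C_mul_X_pow' (p := Q.map f) (n := N + 1)
      (lt_of_le_of_lt Polynomial.natDegree_map_le (by omega))]
    simp
  rw [hmk]
  simp only [Finset.mem_coe, Multiset.mem_toFinset]
  rw [Polynomial.mem_roots', Polynomial.IsRoot, Polynomial.eval_map]
  exact ⟨(Polynomial.map_ne_zero_iff hf).mpr hQ, hx⟩

open Polynomial in
lemma finite_residue_aux (p : ℕ) [Fact p.Prime] [Algebra (RatFunc (ZMod p)) K]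
    [FiniteDimensional (RatFunc (ZMod p)) K] (v : FFPrime K)
    (hX : 0 ≤ v.ord (algebraMap (RatFunc (ZMod p)) K RatFunc.X)) :
    Finite (v.oRing ⧸ v.mIdeal) := by
  classical
  let F := RatFunc (ZMod p)
  let j : (ZMod p)[X] →+* K := (algebraMap F K).comp (algebraMap (ZMod p)[X] F)
  have hj : Function.Injective j :=
    (algebraMap F K).injective.comp (IsFractionRing.injective (ZMod p)[X] F)
  have hjX : j X = algebraMap F K RatFunc.X := by simp [j, F]
  have hconst : ∀ c : ZMod p, 0 ≤ v.ord (j (C c)) := by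
    intro c
    by_cases hc : c = 0
    · simp [hc, v.ord_zero]
    · have : (j (C c)) ^ (p - 1) = 1 := by
        rw [← map_pow, ← map_pow, ZMod.pow_card_sub_one_eq_one hc, map_one, map_one]
      rw [v.ord_eq_zero_of_pow (Nat.sub_ne_zero_of_lt (Fact.out : p.Prime).one_lt) this]
  have hjmem : ∀ f : (ZMod p)[X], j f ∈ v.oRing := by
    intro f
    induction f using Polynomial.induction_on' with
    | add f g hf hg => rw [map_add]; exact v.oRing.add_mem hf hg
    | monomial n c =>
      rw [← C_mul_X_pow_eq_monomial, map_mul, map_pow, hjX]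
      exact v.oRing.mul_mem (hconst c) (v.oRing.pow_mem hX n)
  let j' : (ZMod p)[X] →+* v.oRing := j.codRestrict v.oRing hjmem
  let ψ : (ZMod p)[X] →+* v.oRing ⧸ v.mIdeal := (Ideal.Quotient.mk v.mIdeal).comp j'
  have hψ : ∀ f, ψ f = 0 ↔ 0 < v.ord (j f) := by
    intro f
    simp only [ψ, RingHom.comp_apply, Ideal.Quotient.eq_zero_iff_mem]
    rfl
  -- the kernel is nonzero
  obtain ⟨P, hP0, hP⟩ : ∃ P : (ZMod p)[X], P ≠ 0 ∧ ψ P = 0 := by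
    by_contra! hcon
    have hz : ∀ f : (ZMod p)[X], f ≠ 0 → v.ord (j f) = 0 := by
      intro f hf
      have h1 := hcon f hf
      rw [Ne, hψ, not_lt] at h1
      exact le_antisymm h1 (hjmem f)
    obtain ⟨x, hx, hx'⟩ := exists_ord_ne_zero (K := F) v
    apply hx'
    obtain ⟨f, g, hg, rfl⟩ := IsFractionRing.div_surjective (A := (ZMod p)[X]) x
    have hg0 : g ≠ 0 := nonZeroDivisors.ne_zero hg
    have hf0 : f ≠ 0 := by
      rintro rfl
      simp at hx
    have h1 : v.ord (j g)⁻¹ = ((-0 : ℤ) : WithTop ℤ) := v.ord_inv_int (by rw [hz g hg0]; rfl)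
    rw [map_div₀, div_eq_mul_inv, v.ord_mul]
    change v.ord (j f) + v.ord (j g)⁻¹ = 0
    rw [h1, hz f hf0]; rfl
  -- the range is finite
  have hrfin : Finite ψ.range := by
    have hker : Ideal.span {P} ≤ RingHom.ker ψ := by
      rw [Ideal.span_singleton_le_iff_mem]; exact hP
    have hsub : (Set.range ψ) ⊆ ψ '' {f | f.degree < P.degree} := by
      rintro _ ⟨f, rfl⟩
      refine ⟨f % P, EuclideanDomain.mod_lt f hP0, ?_⟩
      conv_rhs => rw [← EuclideanDomain.mod_add_div f P, map_add, map_mul, hP, zero_mul, add_zero]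
    have hfin : {f : (ZMod p)[X] | f.degree < P.degree}.Finite := by
      have h1 : {f : (ZMod p)[X] | f.degree < P.degree} ⊆
          (Polynomial.degreeLT (ZMod p) (P.natDegree) : Set (ZMod p)[X]) := by
        intro f hf
        rw [SetLike.mem_coe, Polynomial.mem_degreeLT, ← Polynomial.degree_eq_natDegree hP0]
        exact hf
      refine Set.Finite.subset ?_ h1
      have : Finite (Polynomial.degreeLT (ZMod p) (P.natDegree)) :=
        Finite.of_equiv _ (Polynomial.degreeLTEquiv (ZMod p) P.natDegree).symm.toEquiv
      exact Set.toFinite _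
    exact Set.Finite.to_subtype (s := Set.range ψ) ((hfin.image ψ).subset hsub)
  refine finite_of_bounded_degree ψ.range _ ψ.range.subtype Subtype.val_injective
    (Module.finrank F K) ?_
  intro x
  obtain ⟨y, rfl⟩ := Ideal.Quotient.mk_surjective x
  have hyi : IsIntegral F (y : K) := Algebra.IsIntegral.isIntegral _
  have hm0 := minpoly.ne_zero hyi
  let Q0 := IsLocalization.integerNormalization (nonZeroDivisors (ZMod p)[X]) (minpoly F (y : K))
  have hQ00 : Q0 ≠ 0 := by
    intro h
    exact hm0 (IsFractionRing.integerNormalization_eq_zero_iff.mp h)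
  have hQ0r : eval₂ j (y : K) Q0 = 0 :=
    IsLocalization.integerNormalization_eval₂_eq_zero _ (algebraMap F K) _ (minpoly.aeval F (y : K))
  have hQ0d : Q0.natDegree ≤ Module.finrank F K := by
    refine le_trans ?_ (minpoly.natDegree_le (A := F) (y : K))
    exact Polynomial.natDegree_le_natDegree (Polynomial.degree_mono
      (IsLocalization.integerNormalization_support _ _))
  let Q := Q0.primPart
  have hQr : eval₂ j (y : K) Q = 0 := eval₂_primPart_eq_zero hj hQ00 hQ0r
  refine ⟨Q.map ψ.rangeRestrict, ?_, ?_, ?_⟩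
  · intro h0
    -- all coefficients lie in the kernel
    obtain ⟨g, hg⟩ := IsPrincipalIdealRing.principal (RingHom.ker ψ)
    have hdvd : C g ∣ Q := by
      rw [Polynomial.C_dvd_iff_dvd_coeff]
      intro i
      have h1 : ψ (Q.coeff i) = 0 := by
        have := congrArg (fun R => ((R.coeff i : ψ.range) : v.oRing ⧸ v.mIdeal)) h0
        simpa using this
      have h2 : Q.coeff i ∈ RingHom.ker ψ := h1
      rw [hg] at h2
      exact Ideal.mem_span_singleton.mp h2
    have hu : IsUnit g := Q0.isPrimitive_primPart g hdvd
    have h3 : ψ g = 0 := by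
      have : g ∈ RingHom.ker ψ := by rw [hg]; exact Ideal.mem_span_singleton_self g
      exact this
    exact (hu.map ψ).ne_zero h3
  · refine le_trans Polynomial.natDegree_map_le ?_
    rw [Polynomial.natDegree_primPart]; exact hQ0d
  · rw [Polynomial.eval₂_map]
    have h1 : ψ.range.subtype.comp ψ.rangeRestrict = ψ := by ext <;> rfl
    rw [h1]
    have h2 : eval₂ j' y Q = 0 := by
      apply Subtype.val_injective
      have h3 := Polynomial.hom_eval₂ Q j' v.oRing.subtype y
      change v.oRing.subtype _ = _
      rw [h3]
      exact hQr
    have h4 := Polynomial.hom_eval₂ Q j' (Ideal.Quotient.mk v.mIdeal) y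
    rw [h2, map_zero] at h4
    exact h4.symm

open Polynomial in
lemma exists_inversion (p : ℕ) [Fact p.Prime] :
    ∃ s : RatFunc (ZMod p) →+* RatFunc (ZMod p), Function.Surjective s ∧
      s RatFunc.X = (RatFunc.X)⁻¹ := by
  have hinj : Function.Injective
      (aeval (RatFunc.X (K := ZMod p))⁻¹ : (ZMod p)[X] →ₐ[ZMod p] RatFunc (ZMod p)) := by
    rw [← transcendental_iff_injective]
    intro h
    have := h.inv
    rw [inv_inv] at this
    exact RatFunc.transcendental_X this
  let s0 : (ZMod p)[X] →+* RatFunc (ZMod p) :=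
    (aeval (RatFunc.X (K := ZMod p))⁻¹ : (ZMod p)[X] →ₐ[ZMod p] RatFunc (ZMod p)).toRingHom
  have hs0 : Function.Injective s0 := hinj
  let s : RatFunc (ZMod p) →+* RatFunc (ZMod p) := RatFunc.liftRingHom s0
    (nonZeroDivisors_le_comap_nonZeroDivisors_of_injective _ hs0)
  have hsX : s RatFunc.X = (RatFunc.X)⁻¹ := by
    simp only [s]
    rw [RatFunc.liftRingHom_X]
    simp [s0]
  have hss : s.comp s = RingHom.id (RatFunc (ZMod p)) := by
    apply IsFractionRing.injective_comp_algebraMap (A := (ZMod p)[X])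
    apply Polynomial.ringHom_ext
    · intro c
      exact RingHom.congr_fun (RingHom.ext_zmod (((s.comp s).comp (algebraMap _ _)).comp C)
        (((RingHom.id _).comp (algebraMap _ _)).comp C)) c
    · simp only [RingHom.comp_apply, RatFunc.algebraMap_X, RingHom.id_apply]
      rw [hsX, map_inv₀, hsX, inv_inv]
  exact ⟨s, fun x => ⟨s x, RingHom.congr_fun hss x⟩, hsX⟩

lemma exists_residueCard (p : ℕ) [Fact p.Prime] [Algebra (RatFunc (ZMod p)) K]
    [FiniteDimensional (RatFunc (ZMod p)) K] (v : FFPrime K) :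
    ∃ m, 1 < m ∧ v.HasResidueCard m := by
  by_cases hX : 0 ≤ v.ord (algebraMap (RatFunc (ZMod p)) K RatFunc.X)
  · have := finite_residue_aux p v hX
    exact v.hasResidueCard_of_finite
  · obtain ⟨s, hsurj, hsX⟩ := exists_inversion p
    have hfin : ((algebraMap (RatFunc (ZMod p)) K).comp s).Finite := by
      refine RingHom.Finite.comp ?_ (RingHom.Finite.of_surjective s hsurj)
      rw [RingHom.finite_algebraMap]; infer_instance
    have hX' : 0 ≤ v.ord (((algebraMap (RatFunc (ZMod p)) K).comp s) RatFunc.X) := by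
      rw [RingHom.comp_apply, hsX, map_inv₀]
      obtain ⟨n, hn⟩ := v.exists_int (x := algebraMap (RatFunc (ZMod p)) K RatFunc.X)
        (by simp [RatFunc.X_ne_zero])
      rw [v.ord_inv_int hn]
      rw [hn] at hX
      have h0 : ¬ (0 : ℤ) ≤ n := by exact_mod_cast hX
      have : (0 : ℤ) ≤ -n := by omega
      exact_mod_cast this
    have := @finite_residue_aux K _ p _ ((algebraMap (RatFunc (ZMod p)) K).comp s).toAlgebra
      hfin v hX'
    exact v.hasResidueCard_of_finite

end FFPrime

namespace FFPrime

variable {K L : Type} [Field K] [Field L]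

lemma one_le_of_pos {x : WithTop ℤ} (h : 0 < x) : ((1 : ℤ) : WithTop ℤ) ≤ x := by
  induction x using WithTop.recTopCoe with
  | top => exact le_top
  | coe n =>
    have h' : (0 : ℤ) < n := by exact_mod_cast h
    rw [WithTop.coe_le_coe]; omega

lemma pos_of_le {x : WithTop ℤ} {n : ℤ} (hn : 0 < n) (h : (n : WithTop ℤ) ≤ x) : 0 < x :=
  lt_of_lt_of_le (by exact_mod_cast hn) h

/-- the principal units -/
def oneUnits (u : FFPrime L) : Submonoid L where
  carrier := {x | 0 < u.ord (x - 1)}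
  one_mem' := by simp [u.ord_zero]
  mul_mem' := by
    intro x y hx hy
    simp only [Set.mem_ofPred_eq] at *
    have h : x * y - 1 = (x - 1) * (y - 1) + ((x - 1) + (y - 1)) := by ring
    rw [h]
    refine u.ord_lt_add ?_ (u.ord_lt_add hx hy)
    rw [u.ord_mul]
    exact lt_of_lt_of_le hx (le_add_of_nonneg_right hy.le)

lemma mem_oneUnits (u : FFPrime L) (x : L) : x ∈ u.oneUnits ↔ 0 < u.ord (x - 1) := Iff.rfl

lemma exists_lower (u : FFPrime L) (z : L) : ∃ k : ℤ, (k : WithTop ℤ) ≤ u.ord z := by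
  by_cases hz : z = 0
  · exact ⟨0, by rw [hz, u.ord_zero]; exact le_top⟩
  · obtain ⟨k, hk⟩ := u.exists_int hz
    exact ⟨k, hk.ge⟩

lemma dense_of_root [Algebra K L] (u : FFPrime L) (q : ℕ) (hq : u.ord (q : L) = 0)
    (hq0 : q ≠ 0) (α : L) (c ξ : K)
    (hα : α ^ q = algebraMap K L c) (hgen : IntermediateField.adjoin K {α} = ⊤)
    (hξ : ξ ^ q = 1) (hclose : 0 < u.ord (α - algebraMap K L ξ)) :
    ∀ (z : L) (N : ℤ), ∃ x : K, (N : WithTop ℤ) ≤ u.ord (z - algebraMap K L x) := by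
  have hqL : (q : L) ≠ 0 := by
    intro h
    rw [h, u.ord_zero] at hq
    exact absurd hq (by simp)
  have hξ0 : ξ ≠ 0 := by
    rintro rfl
    rw [zero_pow hq0] at hξ
    exact zero_ne_one hξ
  have huξ : u.ord (algebraMap K L ξ) = 0 :=
    u.ord_eq_zero_of_pow hq0 (by rw [← map_pow, hξ, map_one])
  have hξL : algebraMap K L ξ ≠ 0 := by simpa using hξ0
  obtain ⟨β, hβ⟩ : ∃ β : L, α = β * algebraMap K L ξ :=
    ⟨α * (algebraMap K L ξ)⁻¹, by field_simp⟩
  have hβq : β ^ q = algebraMap K L c := by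
    rw [← hα, hβ, mul_pow, ← map_pow, hξ, map_one, mul_one]
  have hβ1 : β ∈ u.oneUnits := by
    have h : α - algebraMap K L ξ = (β - 1) * algebraMap K L ξ := by rw [hβ]; ring
    rw [h, u.ord_mul, huξ, add_zero] at hclose
    exact hclose
  have step : ∀ n : ℕ, ∃ b : K, (((n : ℤ) + 1 : ℤ) : WithTop ℤ) ≤ u.ord (β - algebraMap K L b) := by
    intro n
    induction n with
    | zero =>
      refine ⟨1, ?_⟩
      rw [map_one]
      simpa using one_le_of_pos hβ1
    | succ n ih =>
      obtain ⟨b, hb⟩ := ih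
      have hb1 : algebraMap K L b ∈ u.oneUnits := by
        rw [mem_oneUnits]
        have h1 : 0 < u.ord (algebraMap K L b - β) := by
          rw [u.ord_sub_swap]; exact pos_of_le (by omega) hb
        simpa using u.ord_lt_add h1 hβ1
      refine ⟨b + (c - b ^ q) * (q : K)⁻¹, ?_⟩
      have hfac : β - algebraMap K L (b + (c - b ^ q) * (q : K)⁻¹) =
          (β - algebraMap K L b) *
            ((∑ i ∈ Finset.range q, (1 - β ^ i * (algebraMap K L b) ^ (q - 1 - i))) * (q : L)⁻¹) := by
        rw [Finset.sum_sub_distrib]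
        have hg := (Commute.all β (algebraMap K L b)).geom_sum₂_mul q
        simp only [map_add, map_sub, map_mul, map_pow, map_inv₀, map_natCast]
        rw [← hβq, ← hg]
        simp only [Finset.sum_const, Finset.card_range, nsmul_eq_mul, mul_one]
        field_simp
        ring
      rw [hfac, u.ord_mul, u.ord_mul]
      have hqi : u.ord (q : L)⁻¹ = 0 := by
        have := u.ord_inv_int (x := (q : L)) (n := 0) (by rw [hq]; rfl)
        rw [this]; rfl
      rw [hqi, add_zero]
      have hsum : ((1 : ℤ) : WithTop ℤ) ≤
          u.ord (∑ i ∈ Finset.range q, (1 - β ^ i * (algebraMap K L b) ^ (q - 1 - i))) := by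
        apply u.ord_sum_nonneg
        intro i _
        rw [u.ord_sub_swap]
        exact one_le_of_pos (u.oneUnits.mul_mem (pow_mem hβ1 i) (pow_mem hb1 _))
      have := add_le_add hb hsum
      rw [← WithTop.coe_add] at this
      push_cast at this ⊢
      exact this
  have halg : IsAlgebraic K α := by
    refine IsIntegral.isAlgebraic (IsIntegral.of_pow (Nat.pos_of_ne_zero hq0) ?_)
    rw [hα]; exact isIntegral_algebraMap
  have htop : Algebra.adjoin K {α} = ⊤ := by
    rw [← IntermediateField.adjoin_simple_toSubalgebra_of_isAlgebraic halg, hgen]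
    rfl
  intro z
  have hz : z ∈ Algebra.adjoin K {α} := by rw [htop]; trivial
  induction hz using Algebra.adjoin_induction with
  | mem x hx =>
    rw [Set.mem_singleton_iff] at hx
    subst hx
    intro N
    obtain ⟨b, hb⟩ := step N.toNat
    refine ⟨b * ξ, ?_⟩
    have h : x - algebraMap K L (b * ξ) = (β - algebraMap K L b) * algebraMap K L ξ := by
      rw [hβ, map_mul]; ring
    rw [h, u.ord_mul, huξ, add_zero]
    refine le_trans ?_ hb
    rw [WithTop.coe_le_coe]
    have := Int.self_le_toNat N
    omega
  | algebraMap r =>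
    intro N
    exact ⟨r, by simp [u.ord_zero]⟩
  | add x y _ _ hx hy =>
    intro N
    obtain ⟨x', hx'⟩ := hx N
    obtain ⟨y', hy'⟩ := hy N
    refine ⟨x' + y', ?_⟩
    have h : x + y - algebraMap K L (x' + y') =
        (x - algebraMap K L x') + (y - algebraMap K L y') := by rw [map_add]; ring
    rw [h]
    exact u.ord_le_add hx' hy'
  | mul x y _ _ hx hy =>
    intro N
    obtain ⟨k, hk⟩ := u.exists_lower x
    obtain ⟨y', hy'⟩ := hy (N - k)
    obtain ⟨l, hl⟩ := u.exists_lower (algebraMap K L y')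
    obtain ⟨x', hx'⟩ := hx (N - l)
    refine ⟨x' * y', ?_⟩
    have h : x * y - algebraMap K L (x' * y') =
        x * (y - algebraMap K L y') + (x - algebraMap K L x') * algebraMap K L y' := by
      rw [map_mul]; ring
    rw [h]
    refine u.ord_le_add ?_ ?_
    · rw [u.ord_mul]
      have := add_le_add hk hy'
      rwa [← WithTop.coe_add, add_sub_cancel] at this
    · rw [u.ord_mul]
      have := add_le_add hx' hl
      rwa [← WithTop.coe_add, sub_add_cancel] at this

lemma LiesOverWith.pos {v : FFPrime K} {u : FFPrime L} {φ : K →+* L} {e : ℕ}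
    (h : u.LiesOverWith v φ e) {x : K} (hx : 0 < v.ord x) : 0 < u.ord (φ x) := by
  by_cases hx0 : x = 0
  · rw [hx0, map_zero, u.ord_zero]; exact WithTop.top_pos
  · obtain ⟨n, hn⟩ := v.exists_int hx0
    rw [h.2, hn, ← WithTop.coe_mul]
    rw [hn] at hx
    have h1 : (0 : ℤ) < n := by exact_mod_cast hx
    have h2 : (0 : ℤ) < e := by exact_mod_cast h.1
    exact_mod_cast mul_pos h2 h1

end FFPrime

/-- Behavior of primes in `L = K((1+(a+a⁻¹)w⁻¹)^{1/q})`, where every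
prime occurring in the divisor of `a` has `ord w ≥ 0` and `ord w ≡ 0 mod q`:
(a) any prime `𝔭` of `K` with `ord_𝔭 w < 0` and `ord_𝔭 w ≢ 0 mod q` splits completely,
and the same order conditions hold at every prime above it; (b) at every prime of `L`,
the order of `a` is `≡ 0 mod q`. -/
theorem statement16 (p q : ℕ) [Fact p.Prime] (hq : q.Prime) (hqp : q ≠ p)
    (K : Type) [Field K] [Algebra (RatFunc (ZMod p)) K]
    [FiniteDimensional (RatFunc (ZMod p)) K]
    (ζ : K) (hζ : IsPrimitiveRoot ζ q)
    (a w : K) (ha : a ≠ 0) (hw : w ≠ 0)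
    (hnz : 1 + (a + a⁻¹) * w⁻¹ ≠ 0)
    (hdiv : ∀ v : FFPrime K, v.ord a ≠ 0 → 0 ≤ v.ord w ∧ v.OrdDvd q w)
    (M : Type) [Field M] [Algebra K M] (α : M)
    (hα : α ^ q = algebraMap K M (1 + (a + a⁻¹) * w⁻¹))
    (hgen : IntermediateField.adjoin K {α} = ⊤) :
    (∀ v : FFPrime K, v.ord w < 0 → ¬ v.OrdDvd q w →
      v.SplitsCompletely (algebraMap K M) ∧
      ∀ u : FFPrime M, u.LiesOver v (algebraMap K M) →
        u.ord (algebraMap K M w) < 0 ∧ ¬ u.OrdDvd q (algebraMap K M w)) ∧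
    (∀ u : FFPrime M, u.OrdDvd q (algebraMap K M a)) := by
  classical
  obtain ⟨c, hc⟩ : ∃ c, c = 1 + (a + a⁻¹) * w⁻¹ := ⟨_, rfl⟩
  rw [← hc] at hα hnz
  have hq0 : q ≠ 0 := hq.ne_zero
  have halg : IsAlgebraic K α := by
    refine IsIntegral.isAlgebraic (IsIntegral.of_pow hq.pos ?_)
    rw [hα]; exact isIntegral_algebraMap
  have hMalg : Algebra.IsAlgebraic K M := by
    have h1 := IntermediateField.isAlgebraic_adjoin_simple halg.isIntegral
    rw [hgen] at h1
    exact (IntermediateField.topEquiv (F := K) (E := M)).isAlgebraic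
  constructor
  · intro v hvw hvq
    have hva : v.ord a = 0 := by
      by_contra h
      exact absurd hvw (not_lt.mpr (hdiv v h).1)
    have hvc : 0 < v.ord (c - 1) := by
      have h1 : c - 1 = (a + a⁻¹) * w⁻¹ := by rw [hc]; ring
      rw [h1, v.ord_mul]
      have h2 : v.ord a⁻¹ = 0 := by
        rw [v.ord_inv_int (n := 0) (by rw [hva]; rfl)]; rfl
      have h3 : 0 ≤ v.ord (a + a⁻¹) := v.ord_le_add hva.ge h2.ge
      obtain ⟨n, hn⟩ := v.exists_int hw
      rw [hn] at hvw
      have h4 : n < 0 := by exact_mod_cast hvw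
      have h5 : 0 < v.ord w⁻¹ := by
        rw [v.ord_inv_int hn]
        have : 0 < -n := by omega
        exact_mod_cast this
      exact lt_of_lt_of_le h5 (le_add_of_nonneg_left h3)
    obtain ⟨m, hm1, hm⟩ := v.exists_residueCard p
    have main : ∀ u : FFPrime M, u.LiesOver v (algebraMap K M) →
        u.LiesOverWith v (algebraMap K M) 1 ∧ u.ramIdx v (algebraMap K M) = 1 ∧
          u.resDeg v = 1 := by
      intro u hu
      refine FFPrime.split_of_dense v u (algebraMap K M) hu hm1 hm ?_
      have hqM : u.ord (q : M) = 0 := by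
        have hqz : (q : ZMod p) ≠ 0 := by
          rw [Ne, ZMod.natCast_eq_zero_iff]
          intro h
          exact hqp ((Nat.prime_dvd_prime_iff_eq Fact.out hq).mp h).symm
        have h1 := ZMod.pow_card_sub_one_eq_one hqz
        have h2 := congrArg ((algebraMap K M).comp ((algebraMap (RatFunc (ZMod p)) K).comp
          (algebraMap (ZMod p) (RatFunc (ZMod p))))) h1
        rw [map_pow, map_natCast, map_one] at h2
        exact u.ord_eq_zero_of_pow
          (Nat.sub_ne_zero_of_lt (Fact.out : p.Prime).one_lt) h2
      have hζM : IsPrimitiveRoot (algebraMap K M ζ) q :=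
        hζ.map_of_injective (algebraMap K M).injective
      obtain ⟨e, he⟩ := hu
      have hpos : 0 < u.ord (α ^ q - 1 ^ q) := by
        have := he.pos hvc
        rwa [map_sub, map_one, ← hα, ← one_pow q] at this
      rw [hζM.pow_sub_pow_eq_prod_sub_mul _ _ hq.pos, u.ord_prod_eq] at hpos
      obtain ⟨ξ', hξ', hξpos⟩ : ∃ ξ' ∈ Polynomial.nthRootsFinset q (1 : M),
          0 < u.ord (α - ξ' * 1) := by
        by_contra! hcon
        exact absurd hpos (not_lt.mpr (Finset.sum_nonpos hcon))
      rw [Polynomial.mem_nthRootsFinset hq.pos] at hξ'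
      have : NeZero q := ⟨hq0⟩
      obtain ⟨i, -, hi⟩ := hζM.eq_pow_of_pow_eq_one hξ'
      rw [mul_one, ← hi, ← map_pow] at hξpos
      exact FFPrime.dense_of_root u q hqM hq0 α c (ζ ^ i) hα hgen
        (by rw [← pow_mul, mul_comm, pow_mul, hζ.pow_eq_one, one_pow]) hξpos
    refine ⟨fun u hu => (main u hu).2, fun u hu => ?_⟩
    have hord : u.ord (algebraMap K M w) = v.ord w := by
      rw [(main u hu).1.2]; simp
    rw [FFPrime.OrdDvd, hord]
    exact ⟨hvw, hvq⟩
  · intro u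
    obtain ⟨v, e, he0, he⟩ := FFPrime.exists_under (K := K) u
    obtain ⟨n, hn⟩ := v.exists_int ha
    rw [FFPrime.OrdDvd]
    by_cases hn0 : n = 0
    · refine ⟨0, ?_⟩
      rw [he, hn, hn0]; simp
    obtain ⟨hw0, k, hk⟩ := hdiv v (by rw [hn]; exact_mod_cast hn0)
    rw [hk] at hw0
    have hw0' : (0 : ℤ) ≤ q * k := by exact_mod_cast hw0
    -- the order of a + a⁻¹
    have hinv := v.ord_inv_int hn
    have hs : v.ord (a + a⁻¹) = ((-|n| : ℤ) : WithTop ℤ) := by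
      have hne : v.ord a ≠ v.ord a⁻¹ := by
        rw [hn, hinv, Ne, WithTop.coe_inj]; omega
      have := v.val.map_add_of_distinct_val (x := a) (y := a⁻¹) hne
      rw [v.val_apply, v.val_apply, v.val_apply, hn, hinv, ← WithTop.coe_min] at this
      rw [this, WithTop.coe_inj]
      rcases abs_cases n with h | h <;> omega
    have hwi := v.ord_inv_int hk
    have hprod : v.ord ((a + a⁻¹) * w⁻¹) = ((-|n| - q * k : ℤ) : WithTop ℤ) := by
      rw [v.ord_mul, hs, hwi, ← WithTop.coe_add, sub_eq_add_neg]
    have hnpos : 0 < |n| := abs_pos.mpr hn0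
    have hvc : v.ord c = ((-|n| - q * k : ℤ) : WithTop ℤ) := by
      rw [hc, add_comm, ← hprod]
      apply v.val.map_add_eq_of_lt_left
      rw [v.val_apply, v.val_apply, hprod, v.ord_one]
      have : -|n| - q * k < 0 := by omega
      exact_mod_cast this
    have hα0 : α ≠ 0 := by
      rintro rfl
      rw [zero_pow hq0] at hα
      exact hnz ((map_eq_zero (algebraMap K M)).mp hα.symm)
    obtain ⟨r, hr⟩ := u.exists_int hα0
    have h1 := u.ord_pow_eq α q
    rw [hα, he, hvc, hr, ← WithTop.coe_mul, ← WithTop.coe_nsmul, WithTop.coe_inj,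
      nsmul_eq_mul] at h1
    have h2 : (q : ℤ) ∣ e * |n| := ⟨-(r + e * k), by push_cast at h1 ⊢; linarith⟩
    have h3 : (q : ℤ) ∣ e * n := by
      rcases abs_choice n with h | h <;> rw [h] at h2
      · exact h2
      · rwa [mul_neg, dvd_neg] at h2
    obtain ⟨t, ht⟩ := h3
    refine ⟨t, ?_⟩
    rw [he, hn, ← WithTop.coe_mul, ht]
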